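/- Let c > 1 be a non-integer real number and m ≥ 2 an integer. Then for every positive integer H, the number of distinct words of length H occurring in the sequence (⌊n^c⌋ mod m)_{n≥0} is at least H²/4. -/

import Mathlib

open Filter Topology Finset

/-- Cesàro averages tend to zero. -/
def AvgZero (u : ℕ → ℂ) : Prop :=
  Tendsto (fun N : ℕ => ((N : ℝ)⁻¹) • ∑ n ∈ range N, u n) atTop (𝓝 0)

lemma shift_bound (u : ℕ → ℂ) (hu : ∀ n, ‖u n‖ ≤ 1) (r N : ℕ) :
    ‖∑ n ∈ range N, u (n + r) - ∑ n ∈ range N, u n‖ ≤ 2 * r := by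
  induction r with
  | zero => simp
  | succ r ih =>
    have h1 : ∑ n ∈ range N, u (n + (r+1)) - ∑ n ∈ range N, u (n + r) = u (N + r) - u (0 + r) := by
      rw [← Finset.sum_sub_distrib, ← Finset.sum_range_sub (fun n => u (n + r))]
      refine Finset.sum_congr rfl fun n _ => ?_
      rw [show n + (r+1) = n + 1 + r by ring]
    have h2 : ‖u (N + r) - u (0 + r)‖ ≤ 2 := by
      refine (norm_sub_le _ _).trans ?_
      linarith [hu (N+r), hu (0+r)]
    calc _ = ‖(u (N + r) - u (0 + r)) + (∑ n ∈ range N, u (n + r) - ∑ n ∈ range N, u n)‖ := by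
            rw [← h1]; congr 1; ring
      _ ≤ 2 + 2 * r := (norm_add_le _ _).trans (add_le_add h2 ih)
      _ = _ := by push_cast; ring

lemma AvgZero.shift {u : ℕ → ℂ} (h : AvgZero u) (hu : ∀ n, ‖u n‖ ≤ 1) (r : ℕ) :
    AvgZero (fun n => u (n + r)) := by
  unfold AvgZero at *
  have h1 : Tendsto (fun N : ℕ => ((N : ℝ)⁻¹) •
      (∑ n ∈ range N, u (n + r) - ∑ n ∈ range N, u n)) atTop (𝓝 0) := by
    have h2 : Tendsto (fun N : ℕ => (N : ℝ)⁻¹ * (2 * r)) atTop (𝓝 0) := by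
      have := (tendsto_inv_atTop_nhds_zero_nat (𝕜 := ℝ)).mul_const (2 * (r:ℝ))
      simpa using this
    refine squeeze_zero_norm (fun N => ?_) h2
    rw [norm_smul, norm_inv, Real.norm_natCast]
    exact mul_le_mul_of_nonneg_left (shift_bound u hu r N) (by positivity)
  have := h1.add h
  simp only [add_zero, ← smul_add, sub_add_cancel] at this
  exact this

lemma AvgZero.conj {u : ℕ → ℂ} (h : AvgZero u) :
    AvgZero (fun n => (starRingEnd ℂ) (u n)) := by
  unfold AvgZero at *
  have := (Complex.continuous_conj.tendsto 0).comp h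
  simp only [map_zero] at this
  refine this.congr fun N => ?_
  simp [map_sum]

/-- The van der Corput lemma. -/
lemma vdC (u : ℕ → ℂ) (hu : ∀ n, ‖u n‖ ≤ 1)
    (h : ∀ k : ℕ, 1 ≤ k → AvgZero (fun n => u (n + k) * (starRingEnd ℂ) (u n))) : AvgZero u := by
  have hb : ∀ k n, ‖u (n + k) * (starRingEnd ℂ) (u n)‖ ≤ 1 := by
    intro k n
    rw [norm_mul, RCLike.norm_conj]
    exact mul_le_one₀ (hu _) (norm_nonneg _) (hu _)
  -- correlations
  have hoff : ∀ r s : ℕ, r ≠ s → AvgZero (fun n => u (n + r) * (starRingEnd ℂ) (u (n + s))) := by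
    have key : ∀ r s : ℕ, s < r →
        AvgZero (fun n => u (n + r) * (starRingEnd ℂ) (u (n + s))) := by
      intro r s hsr
      have := (h (r - s) (by omega)).shift (hb _) s
      simp only [add_assoc] at this
      rwa [show s + (r - s) = r by omega] at this
    intro r s hrs
    rcases lt_or_gt_of_ne hrs with h1 | h1
    · have := (key s r h1).conj
      simpa [mul_comm] using this
    · exact key r s h1
  -- V
  let V : ℕ → ℕ → ℂ := fun R n => ∑ r ∈ range R, u (n + r)
  have hV : ∀ R : ℕ, ∀ᶠ N : ℕ in atTop,
      (N:ℝ)⁻¹ * ∑ n ∈ range N, ‖V R n‖ ^ 2 ≤ R + 1 := by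
    intro R
    have hlim : Tendsto (fun N : ℕ => ∑ p ∈ (range R).offDiag, ((N:ℝ)⁻¹ •
        ∑ n ∈ range N, u (n + p.1) * (starRingEnd ℂ) (u (n + p.2)))) atTop (𝓝 0) := by
      rw [show (0:ℂ) = ∑ p ∈ (range R).offDiag, (0:ℂ) by simp]
      exact tendsto_finsetSum _ fun p hp => hoff p.1 p.2 (Finset.mem_offDiag.1 hp).2.2
    have hev := (hlim.norm).eventually (gt_mem_nhds (show ‖(0:ℂ)‖ < 1 by simp))
    filter_upwards [hev, eventually_gt_atTop 0] with N hN hN0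
    have hsq : ∀ n, ((‖V R n‖ ^ 2 : ℝ) : ℂ) =
        ∑ p ∈ range R ×ˢ range R, u (n + p.1) * (starRingEnd ℂ) (u (n + p.2)) := by
      intro n
      push_cast
      rw [← Complex.mul_conj', map_sum, Finset.sum_mul_sum, Finset.sum_product]
    have heq : (((N:ℝ)⁻¹ * ∑ n ∈ range N, ‖V R n‖ ^ 2 : ℝ) : ℂ) =
        ∑ p ∈ (range R).diag, ((N:ℝ)⁻¹ •
          ∑ n ∈ range N, u (n + p.1) * (starRingEnd ℂ) (u (n + p.2))) +
        ∑ p ∈ (range R).offDiag, ((N:ℝ)⁻¹ •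
          ∑ n ∈ range N, u (n + p.1) * (starRingEnd ℂ) (u (n + p.2))) := by
      rw [← Finset.sum_union (Finset.disjoint_diag_offDiag _), Finset.diag_union_offDiag,
        ← Finset.smul_sum, Finset.sum_comm, Complex.ofReal_mul, Complex.ofReal_sum]
      simp only [hsq, Complex.real_smul]
    have hdiag : ‖∑ p ∈ (range R).diag, ((N:ℝ)⁻¹ •
          ∑ n ∈ range N, u (n + p.1) * (starRingEnd ℂ) (u (n + p.2)))‖ ≤ R := by
      rw [Finset.sum_diag]
      refine (norm_sum_le _ _).trans ?_
      refine (Finset.sum_le_card_nsmul _ _ 1 fun r _ => ?_).trans (by simp)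
      rw [norm_smul, norm_inv, Real.norm_natCast]
      have : ‖∑ n ∈ range N, u (n + r) * (starRingEnd ℂ) (u (n + r))‖ ≤ N := by
        refine (norm_sum_le _ _).trans ?_
        refine (Finset.sum_le_card_nsmul _ _ 1 fun n _ => ?_).trans (by simp)
        rw [norm_mul, RCLike.norm_conj]
        exact mul_le_one₀ (hu _) (norm_nonneg _) (hu _)
      rw [inv_mul_le_iff₀ (by positivity)]
      simpa using this
    calc (N:ℝ)⁻¹ * ∑ n ∈ range N, ‖V R n‖ ^ 2 ≤ ‖(((N:ℝ)⁻¹ * ∑ n ∈ range N, ‖V R n‖ ^ 2 : ℝ) : ℂ)‖ := by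
          rw [Complex.norm_real]; exact le_abs_self _
      _ ≤ R + 1 := by
          rw [heq]
          exact (norm_add_le _ _).trans (add_le_add hdiag hN.le)
  unfold AvgZero
  rw [Metric.tendsto_atTop']
  intro ε hε
  obtain ⟨R, hR⟩ : ∃ R : ℕ, 8 / ε ^ 2 < R := exists_nat_gt _
  have hR0 : (0:ℝ) < R := lt_of_le_of_lt (by positivity) hR
  have hR1 : (1:ℝ) ≤ R := by
    have : 0 < R := by exact_mod_cast hR0
    exact_mod_cast this
  have hRN : ∀ᶠ N : ℕ in atTop, 4 * (R:ℝ) / ε < N :=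
    tendsto_natCast_atTop_atTop.eventually (eventually_gt_atTop _)
  have hfin : ∀ᶠ N : ℕ in atTop, dist (((N : ℝ)⁻¹) • ∑ n ∈ range N, u n) 0 < ε := by
    filter_upwards [hV R, hRN, eventually_gt_atTop 0] with N h1 h2 h3
    have hN : (0:ℝ) < N := by exact_mod_cast h3
    rw [dist_zero_right, norm_smul, norm_inv, Real.norm_natCast]
    set S := ∑ n ∈ range N, u n with hS
    have hVS : ‖(R:ℂ) * S - ∑ n ∈ range N, V R n‖ ≤ R * (2 * R) := by
      have : (R:ℂ) * S - ∑ n ∈ range N, V R n =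
          ∑ r ∈ range R, -(∑ n ∈ range N, u (n + r) - S) := by
        simp only [V]
        rw [Finset.sum_comm]
        simp
      rw [this]
      refine (norm_sum_le _ _).trans ?_
      refine (Finset.sum_le_card_nsmul _ _ (2 * (R:ℝ)) fun r hr => ?_).trans (by simp)
      rw [norm_neg]
      refine (shift_bound u hu r N).trans ?_
      have : r < R := by simpa using hr
      have : (r:ℝ) ≤ R := by exact_mod_cast this.le
      linarith
    have hCS : ‖∑ n ∈ range N, V R n‖ ^ 2 ≤ N * ∑ n ∈ range N, ‖V R n‖ ^ 2 := by
      have := sq_sum_le_card_mul_sum_sq (s := range N) (f := fun n => ‖V R n‖)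
      rw [card_range] at this
      refine le_trans ?_ this
      gcongr
      exact norm_sum_le _ _
    have hQ : ∑ n ∈ range N, ‖V R n‖ ^ 2 ≤ N * (R + 1) := by
      rwa [inv_mul_le_iff₀ hN] at h1
    have hRS : R * ‖S‖ ≤ R * (2 * R) + ‖∑ n ∈ range N, V R n‖ := by
      have : ‖(R:ℂ) * S‖ ≤ ‖(R:ℂ) * S - ∑ n ∈ range N, V R n‖ + ‖∑ n ∈ range N, V R n‖ := by
        simpa using norm_add_le ((R:ℂ) * S - ∑ n ∈ range N, V R n) (∑ n ∈ range N, V R n)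
      rw [norm_mul, Complex.norm_natCast] at this
      linarith
    set W := ‖∑ n ∈ range N, V R n‖ with hW
    have hW2 : W < R * N * ε / 2 := by
      have hW0 : 0 ≤ W := norm_nonneg _
      have h5 : W ^ 2 ≤ N ^ 2 * (2 * R) := by
        calc W ^ 2 ≤ N * (N * (R + 1)) := hCS.trans (by gcongr)
          _ ≤ _ := by nlinarith [sq_nonneg (N:ℝ)]
      have h6 : (8:ℝ) < R * ε ^ 2 := by
        rwa [div_lt_iff₀ (by positivity)] at hR
      refine lt_of_pow_lt_pow_left₀ 2 (by positivity) (lt_of_le_of_lt h5 ?_)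
      have : (N:ℝ)^2 * R * 8 < N^2 * R * (R * ε^2) := by gcongr
      nlinarith
    rw [inv_mul_lt_iff₀ hN]
    have h7 : 4 * (R:ℝ) < N * ε := by rwa [div_lt_iff₀ hε] at h2
    have : R * ‖S‖ < R * (N * ε) := by nlinarith
    exact lt_of_mul_lt_mul_left this hR0.le
  obtain ⟨N0, h0⟩ := eventually_atTop.1 hfin
  exact ⟨N0, fun n hn => h0 n hn.le⟩

/-- The additive character `exp (2 π i x)`. -/
noncomputable def ee (x : ℝ) : ℂ := Complex.exp (2 * Real.pi * x * Complex.I)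

lemma ee_norm (x : ℝ) : ‖ee x‖ = 1 := by
  unfold ee
  have := Complex.norm_exp_ofReal_mul_I (2 * Real.pi * x)
  push_cast at this
  exact this

lemma ee_add (x y : ℝ) : ee (x + y) = ee x * ee y := by
  unfold ee; rw [← Complex.exp_add]; push_cast; ring_nf

lemma ee_conj (x : ℝ) : (starRingEnd ℂ) (ee x) = ee (-x) := by
  unfold ee; rw [← Complex.exp_conj]; simp [map_ofNat]

/-- Weights. -/
structure Weight (b : ℕ → ℝ) : Prop where
  mono : Monotone b
  nonneg : 0 ≤ b 0
  top : Tendsto b atTop atTop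
  small : Tendsto (fun n : ℕ => (n:ℝ)⁻¹ * b n) atTop (𝓝 0)
  ratio : Tendsto (fun n => b n / b (n + 1)) atTop (𝓝 1)

lemma abel_bound {b : ℕ → ℝ} (hb : Weight b) (u : ℕ → ℂ) (hu : ∀ n, ‖u n‖ ≤ 1) (N : ℕ) :
    ‖∑ n ∈ range N, b n • (u (n + 1) - u n)‖ ≤ 2 * b N := by
  have h : ∀ N, ‖∑ n ∈ range N, b n • (u (n + 1) - u n) - b N • u N‖ ≤ b N := by
    intro N
    induction N with
    | zero =>
      simp only [range_zero, sum_empty, zero_sub, norm_neg, norm_smul, Real.norm_eq_abs,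
        abs_of_nonneg hb.nonneg]
      exact mul_le_of_le_one_right hb.nonneg (hu 0)
    | succ N ih =>
      have hm : 0 ≤ b (N+1) - b N := sub_nonneg.2 (hb.mono (Nat.le_succ N))
      have : ∑ n ∈ range (N+1), b n • (u (n + 1) - u n) - b (N+1) • u (N+1) =
          (∑ n ∈ range N, b n • (u (n + 1) - u n) - b N • u N) - (b (N+1) - b N) • u (N+1) := by
        rw [sum_range_succ, smul_sub, sub_smul]; abel
      rw [this]
      refine (norm_sub_le _ _).trans ?_
      rw [norm_smul, Real.norm_eq_abs, abs_of_nonneg hm]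
      have := mul_le_of_le_one_right hm (hu (N+1))
      linarith
  have hbN : 0 ≤ b N := hb.nonneg.trans (hb.mono (Nat.zero_le N))
  have h2 : ‖b N • u N‖ ≤ b N := by
    rw [norm_smul, Real.norm_eq_abs, abs_of_nonneg hbN]
    exact mul_le_of_le_one_right hbN (hu N)
  have := norm_add_le (∑ n ∈ range N, b n • (u (n + 1) - u n) - b N • u N) (b N • u N)
  rw [sub_add_cancel] at this
  linarith [h N]

lemma weyl_base {b : ℕ → ℝ} (hb : Weight b) (g : ℕ → ℝ) (A : ℝ) (hA : A ≠ 0)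
    (hg : Tendsto (fun n => b n * (g (n + 1) - g n)) atTop (𝓝 A)) :
    AvgZero (fun n => ee (g n)) := by
  have hd : Tendsto (fun n => g (n + 1) - g n) atTop (𝓝 0) := by
    have h1 := hg.mul (tendsto_inv_atTop_zero.comp hb.top)
    rw [mul_zero] at h1
    refine h1.congr' ?_
    filter_upwards [hb.top.eventually (eventually_gt_atTop 0)] with n hn
    simp only [Function.comp]
    field_simp
  -- derivative of ee at 0
  have hder : HasDerivAt ee (2 * Real.pi * Complex.I) 0 := by
    have h1 : HasDerivAt (fun x : ℝ => (2 * Real.pi * (x:ℂ) * Complex.I)) (2 * Real.pi * Complex.I) 0 := by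
      have := ((Complex.ofRealCLM.hasDerivAt (x := 0)).const_mul (2 * (Real.pi:ℂ))).mul_const Complex.I
      simpa using this
    have := h1.cexp
    simp only [Complex.ofReal_zero, mul_zero, zero_mul, Complex.exp_zero, one_mul] at this
    exact this
  set B : ℂ := A • (2 * Real.pi * Complex.I) with hB
  have hB0 : B ≠ 0 := by
    rw [hB]
    refine smul_ne_zero hA ?_
    simp [Real.pi_ne_zero]
  have h1 : Tendsto (fun n => b n • (ee (g (n+1) - g n) - 1)) atTop (𝓝 B) := by
    have hlo := hder.isLittleO
    have he0 : ee 0 = 1 := by simp [ee]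
    simp only [sub_zero, he0] at hlo
    have h2 := hlo.comp_tendsto hd
    have h3 : (fun n => b n • (ee (g (n+1) - g n) - 1 - (g (n+1) - g n) • (2 * Real.pi * Complex.I)))
        =o[atTop] (fun n => b n • (g (n+1) - g n)) :=
      (Asymptotics.isBigO_refl b atTop).smul_isLittleO h2
    have h4 : (fun n => b n • (ee (g (n+1) - g n) - 1 - (g (n+1) - g n) • (2 * Real.pi * Complex.I)))
        =o[atTop] (fun n => (1:ℝ)) := h3.trans_isBigO (hg.isBigO_one ℝ)
    have h5 := (Asymptotics.isLittleO_one_iff ℝ).1 h4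
    have h6 := h5.add (hg.smul_const (2 * Real.pi * Complex.I))
    rw [zero_add] at h6
    refine h6.congr fun n => ?_
    rw [smul_sub, smul_smul]; abel
  have h2 : Tendsto (fun n => b n • (ee (g (n+1)) - ee (g n)) - B * ee (g n)) atTop (𝓝 0) := by
    have h3 := (h1.sub_const B).norm
    rw [sub_self, norm_zero] at h3
    refine squeeze_zero_norm (fun n => ?_) h3
    have : b n • (ee (g (n+1)) - ee (g n)) - B * ee (g n) =
        (b n • (ee (g (n+1) - g n) - 1) - B) * ee (g n) := by
      have : ee (g (n+1)) = ee (g (n+1) - g n) * ee (g n) := by rw [← ee_add]; simp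
      rw [this]; simp only [Complex.real_smul]; ring
    rw [this, norm_mul, ee_norm, mul_one]
  have h3 := h2.cesaro_smul
  have h4 : Tendsto (fun N : ℕ => (N:ℝ)⁻¹ • ∑ n ∈ range N, b n • (ee (g (n+1)) - ee (g n)))
      atTop (𝓝 0) := by
    have := hb.small.const_mul 2
    rw [mul_zero] at this
    refine squeeze_zero_norm (fun N => ?_) this
    rw [norm_smul, norm_inv, Real.norm_natCast]
    have := mul_le_mul_of_nonneg_left (abel_bound hb (fun n => ee (g n)) (fun n => (ee_norm _).le) N)
      (show (0:ℝ) ≤ (N:ℝ)⁻¹ by positivity)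
    linarith
  have h5 := (h4.sub h3).const_mul B⁻¹
  simp only [sub_zero, mul_zero] at h5
  unfold AvgZero
  refine h5.congr fun N => ?_
  rw [← smul_sub, ← Finset.sum_sub_distrib]
  simp only [sub_sub_cancel]
  rw [← Finset.mul_sum, mul_smul_comm, ← mul_assoc, inv_mul_cancel₀ hB0, one_mul]

lemma Weight.shift_tendsto {b : ℕ → ℝ} (hb : Weight b) (s : ℕ → ℝ) (A : ℝ)
    (hs : Tendsto (fun n => b n * s n) atTop (𝓝 A)) (i : ℕ) :
    Tendsto (fun n => b n * s (n + i)) atTop (𝓝 A) := by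
  induction i with
  | zero => simpa using hs
  | succ i ih =>
    have h1 := hb.ratio.mul (ih.comp (tendsto_add_atTop_nat 1))
    rw [one_mul] at h1
    refine h1.congr' ?_
    filter_upwards [(hb.top.comp (tendsto_add_atTop_nat 1)).eventually (eventually_gt_atTop 0)] with n hn
    simp only [Function.comp] at hn ⊢
    rw [show n + 1 + i = n + (i + 1) by ring]
    field_simp

lemma weyl_gen {b : ℕ → ℝ} (hb : Weight b) (d : ℕ) : ∀ (g : ℕ → ℝ) (A : ℝ), A ≠ 0 →
    Tendsto (fun n => b n * ((fwdDiff 1)^[d + 1] g) n) atTop (𝓝 A) →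
    AvgZero (fun n => ee (g n)) := by
  induction d with
  | zero =>
    intro g A hA hg
    exact weyl_base hb g A hA (by simpa [fwdDiff] using hg)
  | succ d ih =>
    intro g A hA hg
    refine vdC _ (fun n => (ee_norm _).le) fun k hk => ?_
    have h1 : ∀ n, ee (g (n + k)) * (starRingEnd ℂ) (ee (g n)) = ee ((fwdDiff k g) n) := by
      intro n
      rw [ee_conj, ← ee_add]; rfl
    simp only [h1]
    refine ih (fwdDiff k g) (k * A) (mul_ne_zero (by positivity) hA) ?_
    have h2 : ∀ n, ((fwdDiff 1)^[d + 1] (fwdDiff k g)) n = ∑ i ∈ range k, ((fwdDiff 1)^[d+1+1] g) (n + i) := by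
      intro n
      have hc : Function.Commute (fwdDiff (1:ℕ) (G := ℝ)) (fwdDiff k) := by
        intro f; funext n
        simp only [fwdDiff, add_right_comm]; ring
      rw [(hc.iterate_left (d+1)) g]
      simp only [fwdDiff]
      have := Finset.sum_range_sub (fun i => ((fwdDiff 1)^[d+1] g) (n + i)) k
      simp only [add_zero] at this
      rw [Function.iterate_succ_apply' _ (d+1) g]
      exact this.symm
    simp only [h2, Finset.mul_sum]
    have := tendsto_finsetSum (range k) (f := fun i n => b n * ((fwdDiff 1)^[d+1+1] g) (n + i))
      (x := atTop) (a := fun _ => A) (fun i _ => hb.shift_tendsto _ A hg i)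
    simpa using this

open MeasureTheory in
lemma integral_mFourier {ι : Type} [Fintype ι] (k : ι → ℤ) (hk : k ≠ 0) :
    ∫ x, UnitAddTorus.mFourier k x ∂(Measure.pi (fun _ : ι => (AddCircle.haarAddCircle : Measure UnitAddCircle))) = 0 := by
  obtain ⟨j, hj⟩ := Function.ne_iff.1 hk
  simp only [UnitAddTorus.mFourier, ContinuousMap.coe_mk]
  rw [integral_fintype_prod_eq_prod (fun i (x : UnitAddCircle) => fourier (k i) x)]
  refine Finset.prod_eq_zero (Finset.mem_univ j) ?_
  have h1 := (orthonormal_iff_ite.1 (orthonormal_fourier (T := 1))) 0 (k j)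
  rw [if_neg (by simpa using Ne.symm hj)] at h1
  rw [ContinuousMap.inner_toLp] at h1
  simpa using h1

lemma mFourier_coe {ι : Type} [Fintype ι] (k : ι → ℤ) (y : ι → ℝ) :
    UnitAddTorus.mFourier k (fun j => (y j : UnitAddCircle)) = ee (∑ j, k j * y j) := by
  simp only [UnitAddTorus.mFourier, ContinuousMap.coe_mk, fourier_coe_apply, ee]
  rw [← Complex.exp_sum]
  congr 1
  push_cast
  rw [Finset.mul_sum, Finset.sum_mul]
  refine Finset.sum_congr rfl fun j _ => ?_
  ring

open MeasureTheory in
lemma avg_tendsto {ι : Type} [Fintype ι] (y : ℕ → ι → ℝ)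
    (hW : ∀ k : ι → ℤ, k ≠ 0 → AvgZero (fun n => ee (∑ j, k j * y n j)))
    (F : C(UnitAddTorus ι, ℂ)) :
    Tendsto (fun N : ℕ => (N:ℝ)⁻¹ • ∑ n ∈ range N, F (fun j => (y n j : UnitAddCircle))) atTop
      (𝓝 (∫ x, F x ∂(Measure.pi (fun _ : ι => (AddCircle.haarAddCircle : Measure UnitAddCircle))))) := by
  set μ := (Measure.pi (fun _ : ι => (AddCircle.haarAddCircle : Measure UnitAddCircle))) with hμ
  have hIntg : ∀ G : C(UnitAddTorus ι, ℂ), Integrable (fun x => G x) μ := fun G =>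
    G.continuous.integrable_of_hasCompactSupport (HasCompactSupport.of_compactSpace _)
  have hspan : ∀ G ∈ Submodule.span ℂ (Set.range (UnitAddTorus.mFourier (d := ι))),
      Tendsto (fun N : ℕ => (N:ℝ)⁻¹ • ∑ n ∈ range N, G (fun j => (y n j : UnitAddCircle))) atTop
      (𝓝 (∫ x, G x ∂μ)) := by
    intro G hG
    induction hG using Submodule.span_induction with
    | mem G hG =>
      obtain ⟨k, rfl⟩ := hG
      by_cases hk : k = 0
      · subst hk
        rw [UnitAddTorus.mFourier_zero]
        simp only [ContinuousMap.one_apply, integral_const, sum_const, card_range]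
        refine tendsto_const_nhds.congr' ?_
        filter_upwards [eventually_gt_atTop 0] with N hN
        have : (N:ℂ) ≠ 0 := by exact_mod_cast hN.ne'
        simp [hμ, this]
      · rw [integral_mFourier k hk]
        simp only [mFourier_coe]
        exact hW k hk
    | zero => simp
    | add G1 G2 _ _ h1 h2 =>
      have := h1.add h2
      simp only [ContinuousMap.add_apply]
      rw [integral_add (hIntg G1) (hIntg G2)]
      refine this.congr fun N => ?_
      rw [Finset.sum_add_distrib, smul_add]
    | smul a G _ h =>
      have := h.const_mul a
      simp only [ContinuousMap.smul_apply, smul_eq_mul]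
      rw [integral_const_mul]
      refine this.congr fun N => ?_
      rw [← Finset.mul_sum, mul_smul_comm]
  have hF : F ∈ closure ((Submodule.span ℂ (Set.range (UnitAddTorus.mFourier (d := ι)))) : Set C(UnitAddTorus ι, ℂ)) := by
    have h1 := UnitAddTorus.span_mFourier_closure_eq_top (d := ι)
    have h2 : F ∈ (Submodule.span ℂ (Set.range (UnitAddTorus.mFourier (d := ι)))).topologicalClosure := by
      rw [h1]; trivial
    exact h2
  rw [Metric.tendsto_atTop]
  intro ε hε
  obtain ⟨G, hG, hFG⟩ := Metric.mem_closure_iff.1 hF (ε/4) (by positivity)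
  obtain ⟨N0, hN0⟩ := Metric.tendsto_atTop.1 (hspan G hG) (ε/4) (by positivity)
  refine ⟨N0, fun N hN => ?_⟩
  have hpt : ∀ x, ‖F x - G x‖ ≤ ε/4 := by
    intro x
    rw [← dist_eq_norm]
    exact (ContinuousMap.dist_apply_le_dist x).trans hFG.le
  have h1 : dist ((N:ℝ)⁻¹ • ∑ n ∈ range N, F (fun j => (y n j : UnitAddCircle)))
      ((N:ℝ)⁻¹ • ∑ n ∈ range N, G (fun j => (y n j : UnitAddCircle))) ≤ ε/4 := by
    rw [dist_eq_norm, ← smul_sub, ← Finset.sum_sub_distrib, norm_smul, norm_inv, Real.norm_natCast]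
    rcases Nat.eq_zero_or_pos N with rfl | hN
    · simp; positivity
    have hN' : (0:ℝ) < N := by exact_mod_cast hN
    rw [inv_mul_le_iff₀ hN']
    refine (norm_sum_le _ _).trans ((Finset.sum_le_card_nsmul _ _ (ε/4) fun n _ => hpt _).trans ?_)
    simp
  have h2 : dist (∫ x, G x ∂μ) (∫ x, F x ∂μ) ≤ ε/4 := by
    rw [dist_comm, dist_eq_norm, ← integral_sub (hIntg F) (hIntg G)]
    have := norm_integral_le_of_norm_le_const (μ := μ) (f := fun x => F x - G x) (C := ε/4)
      (Eventually.of_forall hpt)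
    simpa [hμ] using this
  have h3 := hN0 N hN
  have := dist_triangle4 ((N:ℝ)⁻¹ • ∑ n ∈ range N, F (fun j => (y n j : UnitAddCircle)))
      ((N:ℝ)⁻¹ • ∑ n ∈ range N, G (fun j => (y n j : UnitAddCircle))) (∫ x, G x ∂μ) (∫ x, F x ∂μ)
  linarith

open MeasureTheory in
lemma density {ι : Type} [Fintype ι] (y : ℕ → ι → ℝ)
    (hW : ∀ k : ι → ℤ, k ≠ 0 → AvgZero (fun n => ee (∑ j, k j * y n j)))
    (t : ι → ℝ) (ε : ℝ) (hε : 0 < ε) (N0 : ℕ) :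
    ∃ n ≥ N0, ∃ z : ι → ℤ, ∀ j, |y n j - t j - z j| < ε := by
  let T : UnitAddTorus ι := fun j => (t j : UnitAddCircle)
  let p : ℕ → UnitAddTorus ι := fun n j => (y n j : UnitAddCircle)
  suffices h : ∃ n ≥ N0, dist (p n) T < ε by
    obtain ⟨n, hn, hd⟩ := h
    refine ⟨n, hn, fun j => round (y n j - t j), fun j => ?_⟩
    have h1 := (dist_pi_lt_iff hε).1 hd j
    have h2 : dist (p n j) (T j) = ‖((y n j - t j : ℝ) : UnitAddCircle)‖ := by
      rw [dist_eq_norm]; rfl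
    rw [h2, UnitAddCircle.norm_eq] at h1
    exact h1
  by_contra hcon
  push Not at hcon
  let f : UnitAddTorus ι → ℝ := fun x => max 0 (ε - dist x T)
  have hf : Continuous f := by fun_prop
  let F : C(UnitAddTorus ι, ℂ) := ⟨fun x => (f x : ℂ), by fun_prop⟩
  set μ := (Measure.pi (fun _ : ι => (AddCircle.haarAddCircle : Measure UnitAddCircle))) with hμ
  have h1 := avg_tendsto y hW F
  have h2 : Tendsto (fun N : ℕ => (N:ℝ)⁻¹ • ∑ n ∈ range N, F (fun j => (y n j : UnitAddCircle))) atTop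
      (𝓝 0) := by
    have h3 : Tendsto (fun n => F (p n)) atTop (𝓝 0) := by
      refine tendsto_const_nhds.congr' ?_
      filter_upwards [eventually_ge_atTop N0] with n hn
      have : f (p n) = 0 := max_eq_left (by linarith [hcon n hn])
      change (0:ℂ) = (f (p n) : ℂ)
      rw [this]; simp
    exact h3.cesaro_smul
  have h3 := tendsto_nhds_unique h1 h2
  have h4 : ∫ x, F x ∂μ = ((∫ x, f x ∂μ : ℝ) : ℂ) := integral_ofReal
  rw [h4] at h3
  have h5 : 0 < ∫ x, f x ∂μ := by
    refine hf.integral_pos_of_hasCompactSupport_nonneg_nonzero (HasCompactSupport.of_compactSpace _)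
      (fun x => le_max_left _ _) (x := T) ?_
    simp only [f, dist_self, sub_zero]
    exact (lt_of_lt_of_le hε (le_max_right _ _)).ne'
  have h6 : (∫ x, f x ∂μ) = 0 := by exact_mod_cast h3
  linarith

lemma fwdDiff_mvt (p : ℕ) : ∀ (D : ℕ → ℝ → ℝ)
    (_ : ∀ i, ∀ x : ℝ, 0 < x → HasDerivAt (D i) (D (i+1) x) x) (x : ℝ), 0 < x →
    ∃ ξ ∈ Set.Icc x (x + p), (fwdDiff 1)^[p] (D 0) x = D p ξ := by
  induction p with
  | zero => intro D hD x hx; exact ⟨x, by simp, rfl⟩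
  | succ p ih =>
    intro D hD x hx
    obtain ⟨ξ, hξ, h1⟩ := ih (fun i => fwdDiff 1 (D i)) (fun i x hx => by
      have h2 := (hD i (x+1) (by linarith)).comp_add_const x 1
      exact h2.sub (hD i x hx)) x hx
    have hξ0 : 0 < ξ := lt_of_lt_of_le hx hξ.1
    obtain ⟨η, hη, h3⟩ := exists_hasDerivAt_eq_slope (D p) (D (p+1)) (show ξ < ξ + 1 by linarith)
      (fun z hz => (hD p z (lt_of_lt_of_le hξ0 hz.1)).continuousAt.continuousWithinAt)
      (fun z hz => hD p z (hξ0.trans hz.1))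
    refine ⟨η, ⟨hξ.1.trans hη.1.le, ?_⟩, ?_⟩
    · push_cast; linarith [hη.2, hξ.2]
    · rw [Function.iterate_succ_apply, h1, h3]
      simp [fwdDiff]

/-- The sequence `n ^ c`. -/
noncomputable def pw (c : ℝ) : ℕ → ℝ := fun n => (n : ℝ) ^ c

lemma pw_diff (c : ℝ) (p : ℕ) (n : ℕ) (hn : 0 < n) :
    ∃ ξ ∈ Set.Icc (n:ℝ) (n + p), (fwdDiff 1)^[p] (pw c) n = (∏ j ∈ range p, (c - j)) * ξ ^ (c - p) := by
  obtain ⟨ξ, hξ, h⟩ := fwdDiff_mvt p (fun i x => (∏ j ∈ range i, (c - j)) * x ^ (c - i))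
    (fun i x hx => by
      have := (Real.hasDerivAt_rpow_const (x := x) (p := c - i) (Or.inl hx.ne')).const_mul (∏ j ∈ range i, (c - j))
      rw [Finset.prod_range_succ]
      rw [show (∏ j ∈ range i, (c - j)) * (c - i) * x ^ (c - ((i + 1 : ℕ) : ℝ)) =
        (∏ j ∈ range i, (c - j)) * ((c - i) * x ^ (c - i - 1)) by
          push_cast
          rw [show c - (i + 1) = c - i - 1 by ring]; ring]
      exact this) n (by exact_mod_cast hn)
  refine ⟨ξ, hξ, ?_⟩
  rw [← h]
  rw [fwdDiff_iter_eq_sum_shift, fwdDiff_iter_eq_sum_shift]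
  refine Finset.sum_congr rfl fun k _ => ?_
  simp [pw]

lemma ratio_tendsto (p : ℕ) (ξ : ℕ → ℝ) (hξ : ∀ᶠ n : ℕ in atTop, ξ n ∈ Set.Icc (n:ℝ) (n + p)) :
    Tendsto (fun n : ℕ => ξ n / n) atTop (𝓝 1) := by
  have h1 : Tendsto (fun n : ℕ => 1 + (p:ℝ) * (n:ℝ)⁻¹) atTop (𝓝 1) := by
    have := ((tendsto_inv_atTop_nhds_zero_nat (𝕜 := ℝ)).const_mul (p:ℝ)).const_add 1
    simpa using this
  refine tendsto_of_tendsto_of_tendsto_of_le_of_le' tendsto_const_nhds h1 ?_ ?_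
  · filter_upwards [hξ, eventually_gt_atTop 0] with n hn h0
    have : (0:ℝ) < n := by exact_mod_cast h0
    rw [le_div_iff₀ this]; linarith [hn.1]
  · filter_upwards [hξ, eventually_gt_atTop 0] with n hn h0
    have : (0:ℝ) < n := by exact_mod_cast h0
    rw [div_le_iff₀ this]
    have : (1 + (p:ℝ) * (n:ℝ)⁻¹) * n = n + p := by field_simp
    linarith [hn.2]

lemma pw_diff_tendsto (c : ℝ) (p : ℕ) :
    Tendsto (fun n : ℕ => (n:ℝ) ^ (p - c) * (fwdDiff 1)^[p] (pw c) n) atTop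
      (𝓝 (∏ j ∈ range p, (c - j))) := by
  have : ∀ n : ℕ, ∃ ξ : ℝ, 0 < n → ξ ∈ Set.Icc (n:ℝ) (n + p) ∧
      (fwdDiff 1)^[p] (pw c) n = (∏ j ∈ range p, (c - j)) * ξ ^ (c - p) := by
    intro n
    by_cases hn : 0 < n
    · obtain ⟨ξ, h⟩ := pw_diff c p n hn
      exact ⟨ξ, fun _ => h⟩
    · exact ⟨0, fun h => absurd h hn⟩
  choose ξ hξ using this
  have h1 := ratio_tendsto p ξ (by
    filter_upwards [eventually_gt_atTop 0] with n hn using (hξ n hn).1)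
  have h2 := (h1.rpow_const (p := c - p) (Or.inl one_ne_zero)).const_mul (∏ j ∈ range p, (c - j))
  rw [Real.one_rpow, mul_one] at h2
  refine h2.congr' ?_
  filter_upwards [eventually_gt_atTop 0] with n hn
  have hn' : (0:ℝ) < n := by exact_mod_cast hn
  rw [(hξ n hn).2, Real.div_rpow (hn'.le.trans (hξ n hn).1.1) hn'.le,
    show (p:ℝ) - c = -(c - p) by ring, Real.rpow_neg hn'.le]
  field_simp

lemma weight_pow (s : ℝ) (h0 : 0 < s) (h1 : s < 1) : Weight (fun n : ℕ => (n:ℝ) ^ s) where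
  mono := fun a b hab => Real.rpow_le_rpow (by positivity) (by exact_mod_cast hab) h0.le
  nonneg := by positivity
  top := (tendsto_rpow_atTop h0).comp tendsto_natCast_atTop_atTop
  small := by
    have := (tendsto_rpow_neg_atTop (y := 1 - s) (by linarith)).comp (tendsto_natCast_atTop_atTop (R := ℝ))
    refine this.congr' ?_
    filter_upwards [eventually_gt_atTop 0] with n hn
    have hn' : (0:ℝ) < n := by exact_mod_cast hn
    simp only [Function.comp]
    rw [show -(1 - s) = -1 + s by ring, Real.rpow_add hn', Real.rpow_neg_one]
  ratio := by
    have h1 := (ratio_tendsto 1 (fun n => (n:ℝ) + 1) (Eventually.of_forall fun n => by simp)).inv₀ one_ne_zero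
    have h2 := h1.rpow_const (p := s) (Or.inl (by simp))
    simp only [inv_one, Real.one_rpow, inv_div] at h2
    refine h2.congr fun n => ?_
    rw [Real.div_rpow (by positivity) (by positivity)]
    push_cast; rfl

lemma diff_higher {b : ℕ → ℝ} (hb : Weight b) (f : ℕ → ℝ) (p : ℕ) (A : ℝ)
    (h : Tendsto (fun n => b n * (fwdDiff 1)^[p] f n) atTop (𝓝 A)) (i : ℕ) (hi : 1 ≤ i) :
    Tendsto (fun n => b n * (fwdDiff 1)^[p + i] f n) atTop (𝓝 0) := by
  have step : ∀ q B, Tendsto (fun n => b n * (fwdDiff 1)^[q] f n) atTop (𝓝 B) →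
      Tendsto (fun n => b n * (fwdDiff 1)^[q + 1] f n) atTop (𝓝 0) := by
    intro q B hq
    have h1 := (hb.shift_tendsto _ B hq 1).sub hq
    rw [sub_self] at h1
    refine h1.congr fun n => ?_
    rw [Function.iterate_succ_apply']
    simp only [fwdDiff]
    ring
  induction i, hi using Nat.le_induction with
  | base => exact step p A h
  | succ i _ ih => exact step (p + i) 0 ih

lemma weyl_pw (c : ℝ) (K : ℕ) (h0 : (K:ℝ) < c) (h1 : c < K + 1) (m : ℕ) (hm : 0 < m)
    (k : Fin (K+1) → ℤ) (hk : k ≠ 0) :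
    AvgZero (fun n => ee (∑ j, k j * ((fwdDiff 1)^[(j:ℕ)] (pw c) n / m))) := by
  have hb := weight_pow (K + 1 - c) (by linarith) (by linarith)
  set b : ℕ → ℝ := fun n : ℕ => (n:ℝ) ^ ((K:ℝ) + 1 - c) with hbdef
  set A := ∏ j ∈ range (K+1), (c - j) with hA
  have hA0 : A ≠ 0 := by
    refine Finset.prod_ne_zero_iff.2 fun j hj => ?_
    have : j < K + 1 := by simpa using hj
    have : (j:ℝ) ≤ K := by exact_mod_cast Nat.lt_succ_iff.1 this
    exact (by linarith : 0 < c - j).ne'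
  have hlim : Tendsto (fun n => b n * (fwdDiff 1)^[K+1] (pw c) n) atTop (𝓝 A) := by
    have := pw_diff_tendsto c (K+1)
    push_cast at this
    exact this
  have hhigh := diff_higher hb (pw c) (K+1) A hlim
  obtain ⟨j0, hj0, hmin⟩ : ∃ j0, k j0 ≠ 0 ∧ ∀ j < j0, k j = 0 := by
    have hne : (Finset.univ.filter (fun j => k j ≠ 0)).Nonempty := by
      obtain ⟨j, hj⟩ := Function.ne_iff.1 hk
      exact ⟨j, by simpa using hj⟩
    refine ⟨_, by simpa using Finset.min'_mem _ hne, fun j hj => ?_⟩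
    by_contra hc
    exact absurd (Finset.min'_le _ j (by simpa using hc)) (not_le.2 hj)
  have hj0K : (j0:ℕ) ≤ K := Nat.lt_succ_iff.1 j0.2
  refine weyl_gen hb (K - j0) _ (k j0 / m * A)
    (mul_ne_zero (div_ne_zero (by exact_mod_cast hj0) (by positivity)) hA0) ?_
  have hg : (fun n => ∑ j, (k j:ℝ) * ((fwdDiff 1)^[(j:ℕ)] (pw c) n / m)) =
      ∑ j, ((k j : ℝ) / m) • (fwdDiff 1)^[(j:ℕ)] (pw c) := by
    funext n
    rw [Finset.sum_apply]
    refine Finset.sum_congr rfl fun j _ => ?_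
    simp only [Pi.smul_apply, smul_eq_mul]
    ring
  rw [hg]
  have hval : ∀ n, b n * (fwdDiff 1)^[K - j0 + 1] (∑ j, ((k j : ℝ) / m) • (fwdDiff 1)^[(j:ℕ)] (pw c)) n
      = ∑ j, ((k j : ℝ) / m) * (b n * (fwdDiff 1)^[K - j0 + 1 + j] (pw c) n) := by
    intro n
    rw [fwdDiff_iter_finsetSum, Finset.sum_apply, Finset.mul_sum]
    refine Finset.sum_congr rfl fun j _ => ?_
    rw [fwdDiff_iter_const_smul, Pi.smul_apply, smul_eq_mul, ← Function.iterate_add_apply]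
    ring
  simp only [hval]
  rw [show (k j0 : ℝ) / m * A = ∑ j : Fin (K+1), if j = j0 then (k j0 : ℝ) / m * A else 0 by simp]
  refine tendsto_finsetSum _ fun j _ => ?_
  rcases lt_trichotomy j j0 with h | h | h
  · rw [if_neg h.ne, hmin j h]
    simp
  · subst h
    rw [if_pos rfl, show K - (j:ℕ) + 1 + j = K + 1 by omega]
    exact hlim.const_mul _
  · have h' : (j0:ℕ) < j := h
    rw [if_neg h.ne', show K - (j0:ℕ) + 1 + j = (K + 1) + (j - j0) by omega]
    have := (hhigh (j - j0) (by omega)).const_mul ((k j : ℝ) / m)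
    simpa using this

lemma newton_lin (u v : ℝ) (h : ℕ) :
    ∑ j ∈ range (h+1), (h.choose j : ℝ) * (if j = 0 then u else if j = 1 then v else 0) = u + h * v := by
  cases h with
  | zero => simp
  | succ h =>
    rw [Finset.sum_range_succ', Finset.sum_range_succ']
    simp
    ring

lemma realize (c : ℝ) (hc : 1 < c) (hci : ∀ z : ℤ, c ≠ z) (m : ℕ) (hm : 2 ≤ m) (H : ℕ)
    (q : ℕ) (hq : 1 ≤ q) (i : ℕ) :
    ∃ n : ℕ, ∀ h : ℕ, h < H →
      ((⌊((n : ℝ) + h) ^ c⌋ : ℤ) : ZMod m) = (((h + i) / q : ℕ) : ZMod m) := by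
  set K := ⌊c⌋₊ with hK
  have hK0 : (K:ℝ) < c := by
    refine lt_of_le_of_ne (Nat.floor_le (by linarith)) fun h => hci (K:ℤ) ?_
    rw [← h]; simp
  have hK1 : c < K + 1 := Nat.lt_floor_add_one c
  have hK2 : 1 ≤ K := Nat.le_floor (by simpa using hc.le)
  have hq' : (0:ℝ) < q := by exact_mod_cast hq
  have hm' : (0:ℝ) < m := by positivity
  set δ : ℝ := 1 / (4 * q * 2 ^ H) with hδ
  have hδ0 : 0 < δ := by positivity
  set T : ℕ → ℝ := fun j => if j = 0 then (i + 1/2) / q else if j = 1 then 1 / (q:ℝ) else 0 with hT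
  -- high differences are small
  have hb := weight_pow (K + 1 - c) (by linarith) (by linarith)
  have hlim : Tendsto (fun n => (fun n : ℕ => (n:ℝ) ^ ((K:ℝ) + 1 - c)) n * (fwdDiff 1)^[K+1] (pw c) n) atTop
      (𝓝 (∏ j ∈ range (K+1), (c - j))) := by
    have := pw_diff_tendsto c (K+1)
    push_cast at this
    exact this
  have hsmall : ∀ j, K < j → Tendsto (fun n => (fwdDiff 1)^[j] (pw c) n) atTop (𝓝 0) := by
    intro j hj
    have hB : ∃ B, Tendsto (fun n => (fun n : ℕ => (n:ℝ) ^ ((K:ℝ) + 1 - c)) n * (fwdDiff 1)^[j] (pw c) n)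
        atTop (𝓝 B) := by
      rcases Nat.eq_or_lt_of_le (Nat.succ_le_of_lt hj) with h | h
      · exact ⟨_, by rw [← h]; exact hlim⟩
      · have := diff_higher hb (pw c) (K+1) _ hlim (j - (K+1)) (by omega)
        rw [show K + 1 + (j - (K+1)) = j by omega] at this
        exact ⟨0, this⟩
    obtain ⟨B, hB⟩ := hB
    have h1 := hB.mul (tendsto_inv_atTop_zero.comp hb.top)
    rw [mul_zero] at h1
    refine h1.congr' ?_
    filter_upwards [hb.top.eventually (eventually_gt_atTop 0)] with n hn
    simp only [Function.comp]
    field_simp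
  have hev : ∀ᶠ n in atTop, ∀ j ∈ (Finset.range H).filter (fun j => K < j),
      |(fwdDiff 1)^[j] (pw c) n| < δ := by
    rw [Filter.eventually_all_finset]
    intro j hj
    have := (hsmall j (by simpa using (Finset.mem_filter.1 hj).2)).abs
    rw [abs_zero] at this
    exact this.eventually (gt_mem_nhds hδ0)
  obtain ⟨N0, hN0⟩ := eventually_atTop.1 hev
  obtain ⟨n, hn, z, hz⟩ := density (ι := Fin (K+1)) (fun n j => (fwdDiff 1)^[(j:ℕ)] (pw c) n / m)
    (fun k hk => weyl_pw c K hK0 hK1 m (by omega) k hk) (fun j => T j / m) (δ / m) (by positivity) N0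
  have happ : ∀ j < H, ∃ w : ℤ, |(fwdDiff 1)^[j] (pw c) n - T j - m * w| < δ := by
    intro j hj
    by_cases hjK : K < j
    · refine ⟨0, ?_⟩
      have h1 : T j = 0 := by
        simp only [hT]; rw [if_neg (by omega), if_neg (by omega)]
      rw [h1]
      have := hN0 n hn j (Finset.mem_filter.2 ⟨Finset.mem_range.2 hj, hjK⟩)
      simpa using this
    · refine ⟨z ⟨j, by omega⟩, ?_⟩
      have h1 := hz ⟨j, by omega⟩
      simp only at h1
      rw [lt_div_iff₀ hm', ← abs_of_pos hm', ← abs_mul, abs_of_pos hm'] at h1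
      rwa [show ((fwdDiff 1)^[j] (pw c) n / m - T j / m - z ⟨j, by omega⟩) * m =
        (fwdDiff 1)^[j] (pw c) n - T j - m * z ⟨j, by omega⟩ by field_simp] at h1
  have happ' : ∀ j, ∃ w : ℤ, j < H → |(fwdDiff 1)^[j] (pw c) n - T j - m * w| < δ := by
    intro j
    by_cases hj : j < H
    · obtain ⟨w, hw⟩ := happ j hj; exact ⟨w, fun _ => hw⟩
    · exact ⟨0, fun h => absurd h hj⟩
  choose w hw using happ'
  refine ⟨n, fun h hh => ?_⟩
  set Z : ℤ := ∑ j ∈ range (h+1), (h.choose j : ℤ) * w j with hZ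
  set E : ℝ := ∑ j ∈ range (h+1), (h.choose j : ℝ) * ((fwdDiff 1)^[j] (pw c) n - T j - m * w j) with hE
  have hsum : ((n:ℝ) + h) ^ c = m * Z + (i + 1/2 + h) / q + E := by
    have h1 := shift_eq_sum_fwdDiff_iter 1 (pw c) h n
    have h2 : pw c (n + h • 1) = ((n:ℝ) + h) ^ c := by simp [pw]
    have h3 := newton_lin ((i + 1/2) / q) (1 / (q:ℝ)) h
    rw [← h2, h1]
    have h4 : (i + 1/2 + h) / (q:ℝ) = ∑ j ∈ range (h+1), (h.choose j : ℝ) * T j := by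
      rw [h3]; ring
    rw [h4, hE, hZ]
    push_cast
    rw [Finset.mul_sum, ← Finset.sum_add_distrib, ← Finset.sum_add_distrib]
    refine Finset.sum_congr rfl fun j _ => ?_
    rw [nsmul_eq_mul]; ring
  have hEb : |E| < 1 / (2 * q) := by
    have h1 : |E| ≤ ∑ j ∈ range (h+1), (h.choose j : ℝ) * δ := by
      refine (Finset.abs_sum_le_sum_abs _ _).trans (Finset.sum_le_sum fun j hj => ?_)
      rw [abs_mul, Nat.abs_cast]
      have : j < h + 1 := by simpa using hj
      exact mul_le_mul_of_nonneg_left (hw j (by omega)).le (by positivity)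
    have h2 : ∑ j ∈ range (h+1), (h.choose j : ℝ) = 2 ^ h := by
      exact_mod_cast Nat.sum_range_choose h
    rw [← Finset.sum_mul, h2] at h1
    have h3 : (2:ℝ) ^ h ≤ 2 ^ H := pow_le_pow_right₀ (by norm_num) hh.le
    have h4 : (2:ℝ) ^ H * δ = 1 / (4 * q) := by rw [hδ]; field_simp
    have h5 : (1:ℝ) / (4 * q) < 1 / (2 * q) := by
      apply one_div_lt_one_div_of_lt <;> linarith
    calc |E| ≤ 2 ^ h * δ := h1
      _ ≤ 2 ^ H * δ := by gcongr
      _ < _ := by rw [h4]; exact h5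
  have hfl : ⌊((n:ℝ) + h) ^ c⌋ = m * Z + (((h + i) / q : ℕ) : ℤ) := by
    rw [Int.floor_eq_iff, hsum]
    have hd1 : q * ((h + i) / q) ≤ h + i := Nat.mul_div_le _ _
    have hd2 : h + i + 1 ≤ q * ((h + i) / q + 1) := Nat.lt_mul_div_succ _ (by omega)
    set Q := (h + i) / q
    have hd1' : (q:ℝ) * Q ≤ h + i := by exact_mod_cast hd1
    have hd2' : (h:ℝ) + i + 1 ≤ q * (Q + 1) := by exact_mod_cast hd2
    have e1 : (i + 1/2 + h) / (q:ℝ) = (h + i) / q + 1 / (2 * q) := by field_simp; ring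
    have e2 : (i + 1/2 + h) / (q:ℝ) = (h + i + 1) / q - 1 / (2 * q) := by field_simp; ring
    have g1 : (Q:ℝ) ≤ (h + i) / q := by rw [le_div_iff₀ hq']; linarith
    have g2 : ((h:ℝ) + i + 1) / q ≤ Q + 1 := by rw [div_le_iff₀ hq']; linarith
    have := abs_lt.1 hEb
    push_cast
    constructor
    · rw [e1]; linarith
    · rw [e2]; linarith
  rw [hfl, Int.cast_add, Int.cast_mul, Int.cast_natCast, Int.cast_natCast, ZMod.natCast_self,
    zero_mul, zero_add]

lemma card_index (H : ℕ) :
    ((Finset.Icc 1 (H/2)).sigma (fun a => Finset.Icc a (H - a))).card = (H/2) * (H - H/2) := by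
  have h : ∀ k, 2 * k ≤ H → ∑ a ∈ Finset.Icc 1 k, (H - a + 1 - a) = k * (H - k) := by
    intro k
    induction k with
    | zero => simp
    | succ k ih =>
      intro hk
      rw [Finset.sum_Icc_succ_top (by omega), ih (by omega)]
      obtain ⟨d, rfl⟩ := Nat.exists_eq_add_of_le hk
      rw [show 2 * (k+1) + d - k = k + d + 2 by omega, show 2 * (k+1) + d - (k+1) = k + d + 1 by omega,
        show k + d + 1 + 1 - (k+1) = d + 1 by omega]
      ring
  rw [Finset.card_sigma]
  simp only [Nat.card_Icc]
  exact h _ (by omega)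

theorem stmt_7 (c : ℝ) (hc : 1 < c) (hci : ∀ z : ℤ, c ≠ z)
    (m : ℕ) (hm : 2 ≤ m) (H : ℕ) (hH : 1 ≤ H) :
    ((H : ℝ) ^ 2) / 4 ≤
      (Set.ncard {w : Fin H → ZMod m |
        ∃ n : ℕ, ∀ h : Fin H, w h = ((⌊((n : ℝ) + h) ^ c⌋ : ℤ) : ZMod m)} : ℝ) := by
  classical
  have : NeZero m := ⟨by omega⟩
  have : Fact (1 < m) := ⟨hm⟩
  set S := {w : Fin H → ZMod m |
        ∃ n : ℕ, ∀ h : Fin H, w h = ((⌊((n : ℝ) + h) ^ c⌋ : ℤ) : ZMod m)} with hS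
  let I : Finset (Σ _ : ℕ, ℕ) := (Finset.Icc 1 (H/2)).sigma (fun a => Finset.Icc a (H - a))
  let W : (Σ _ : ℕ, ℕ) → Fin H → ZMod m := fun x h => ((((h:ℕ) + (x.2 - x.1)) / x.2 : ℕ) : ZMod m)
  let J : Finset (Σ _ : ℕ, ℕ) := insert ⟨H, H⟩ I
  have hI : ∀ x ∈ I, 1 ≤ x.1 ∧ x.1 ≤ x.2 ∧ x.1 + x.2 ≤ H := by
    intro x hx
    simp only [I, Finset.mem_sigma, Finset.mem_Icc] at hx
    omega
  have hJ : ∀ x ∈ J, 1 ≤ x.1 ∧ x.1 ≤ x.2 ∧ (x.1 + x.2 ≤ H ∨ (x.1 = H ∧ x.2 = H)) := by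
    intro x hx
    rcases Finset.mem_insert.1 hx with rfl | hx
    · exact ⟨hH, le_rfl, Or.inr ⟨rfl, rfl⟩⟩
    · have := hI x hx; exact ⟨this.1, this.2.1, Or.inl this.2.2⟩
  have hJcard : J.card = (H/2) * (H - H/2) + 1 := by
    rw [Finset.card_insert_of_notMem, card_index]
    intro h
    have := hI _ h
    simp only at this
    omega
  have hsub : ((J.image W : Finset (Fin H → ZMod m)) : Set (Fin H → ZMod m)) ⊆ S := by
    intro w hw
    obtain ⟨x, hx, rfl⟩ := Finset.mem_image.1 (Finset.mem_coe.1 hw)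
    have := hJ x hx
    obtain ⟨n, hn⟩ := realize c hc hci m hm H x.2 (by omega) (x.2 - x.1)
    exact ⟨n, fun h => (hn h h.2).symm⟩
  -- values
  have v0 : ∀ a q h : ℕ, 1 ≤ a → a ≤ q → h < a → (h + (q - a)) / q = 0 := by
    intro a q h h1 h2 h3
    exact Nat.div_eq_of_lt (by omega)
  have v1 : ∀ a q h : ℕ, 1 ≤ a → a ≤ q → a ≤ h → h < a + q → (h + (q - a)) / q = 1 := by
    intro a q h h1 h2 h3 h4
    exact Nat.div_eq_of_lt_le (by omega) (by omega)
  have v2 : ∀ a q : ℕ, 1 ≤ a → a ≤ q → (a + q + (q - a)) / q = 2 := by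
    intro a q h1 h2
    exact Nat.div_eq_of_lt_le (by omega) (by omega)
  have key1 : ∀ x ∈ J, ∀ y ∈ J, W x = W y → ¬ x.1 < y.1 := by
    intro x hx y hy hxy hlt
    have hx' := hJ x hx
    have hy' := hJ y hy
    have := congrFun hxy ⟨x.1, by omega⟩
    simp only [W] at this
    rw [v1 x.1 x.2 x.1 (by omega) (by omega) (by omega) (by omega),
      v0 y.1 y.2 x.1 (by omega) (by omega) hlt] at this
    simp at this
  have key2 : ∀ x ∈ J, ∀ y ∈ J, W x = W y → x.1 = y.1 → ¬ x.2 < y.2 := by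
    intro x hx y hy hxy he hlt
    have hx' := hJ x hx
    have hy' := hJ y hy
    have := congrFun hxy ⟨x.1 + x.2, by omega⟩
    simp only [W] at this
    rw [v2 x.1 x.2 (by omega) (by omega),
      v1 y.1 y.2 (x.1 + x.2) (by omega) (by omega) (by omega) (by omega)] at this
    have h1 : (1 : ZMod m) = 0 := by
      push_cast at this
      linear_combination this
    exact one_ne_zero h1
  have hinj : Set.InjOn W (J : Set (Σ _ : ℕ, ℕ)) := by
    intro x hx y hy hxy
    have h1 : x.1 = y.1 := le_antisymm (not_lt.1 (key1 y hy x hx hxy.symm)) (not_lt.1 (key1 x hx y hy hxy))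
    have h2 : x.2 = y.2 := le_antisymm (not_lt.1 (key2 y hy x hx hxy.symm h1.symm))
      (not_lt.1 (key2 x hx y hy hxy h1))
    exact Sigma.ext h1 (heq_of_eq h2)
  have hle : (H/2) * (H - H/2) + 1 ≤ S.ncard := by
    have h1 := Set.ncard_le_ncard hsub (Set.toFinite S)
    rw [Set.ncard_coe_finset, Finset.card_image_of_injOn hinj, hJcard] at h1
    exact h1
  have hH4 : H ^ 2 ≤ 4 * ((H/2) * (H - H/2) + 1) := by
    rcases Nat.even_or_odd' H with ⟨k, rfl | rfl⟩
    · rw [show 2 * k / 2 = k by omega, show 2 * k - k = k by omega]; nlinarith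
    · rw [show (2 * k + 1) / 2 = k by omega, show 2 * k + 1 - k = k + 1 by omega]; nlinarith
  have hfin : H ^ 2 ≤ 4 * S.ncard := hH4.trans (by omega)
  have : (H:ℝ) ^ 2 ≤ 4 * (S.ncard : ℝ) := by exact_mod_cast hfin
  linarith
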